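/- Let A be a filtered ring and M a filtered A-module. If the associated graded module gr M is a flat module over the associated graded ring gr A, then M is a flat A-module. -/

import Mathlib

/-!
Flatness of `M` is tested by the equational criterion: every relation `∑ aₖ xₖ = 0` must be trivial.
If `aₖ` and `xₖ` have degrees `pₖ` and `qₖ` with `pₖ + qₖ = n`, the symbols satisfy a homogeneous
relation in `gr M`, which is trivial with homogeneous witnesses because `gr M` is flat. Lifting the
witnesses to `bₖⱼ` and `yⱼ` of degrees `qₖ - dⱼ` and `dⱼ` rewrites the relation as
`∑ₖ aₖ (xₖ - ∑ⱼ bₖⱼ yⱼ) + ∑ⱼ (∑ₖ aₖ bₖⱼ) yⱼ = 0`, whose terms have total degree `n - 1`, and a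
trivialization of this relation yields one of the original. Induction on `n` ends in negative
degree, where every term has a zero factor.
-/

section TrivialRelation

open Module

variable {R M ι κ : Type*} [CommRing R] [AddCommGroup M] [Module R M] [Fintype ι] [Fintype κ]

theorem isTrivialRelation_of_eq_sum_smul {f : ι → R} {x : ι → M} (b : ι → κ → R) (y : κ → M)
    (hx : ∀ i, x i = ∑ j, b i j • y j)
    (h : IsTrivialRelation (fun j => ∑ i, f i * b i j) y) : IsTrivialRelation f x := by
  obtain ⟨l, c, z, hy, hc⟩ := h
  refine ⟨l, fun i m => ∑ j, b i j * c j m, z, fun i => ?_, fun m => ?_⟩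
  · simp only [hx, hy, Finset.smul_sum, Finset.sum_smul, mul_smul]
    exact Finset.sum_comm
  · rw [← hc m]
    simp only [Finset.mul_sum, Finset.sum_mul, mul_assoc]
    exact Finset.sum_comm

theorem isTrivialRelation_zero_left (x : ι → M) : IsTrivialRelation (0 : ι → R) x := by
  classical
  rw [← (Fintype.equivFin ι).symm.isTrivialRelation_comp]
  exact ⟨_, fun i j => if i = j then 1 else 0, x ∘ (Fintype.equivFin ι).symm, by simp, by simp⟩

theorem isTrivialRelation_of_forall_eq_zero_or_eq_zero {f : ι → R} {x : ι → M}
    (h : ∀ i, f i = 0 ∨ x i = 0) : IsTrivialRelation f x := by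
  classical
  refine isTrivialRelation_of_eq_sum_smul
    (fun i j => if i = j then if x i = 0 then 0 else 1 else 0) x (fun i => ?_) ?_
  · by_cases hi : x i = 0 <;> simp [hi]
  · convert isTrivialRelation_zero_left (R := R) x using 2 with j
    rcases h j with hj | hj <;> simp [hj]

theorem isTrivialRelation_of_sumElim {f : ι → R} {x : ι → M} (b : ι → κ → R) (y : κ → M)
    (h : IsTrivialRelation (Sum.elim f fun j => ∑ i, f i * b i j)
      (Sum.elim (fun i => x i - ∑ j, b i j • y j) y)) : IsTrivialRelation f x := by
  classical
  refine isTrivialRelation_of_eq_sum_smul (fun i => Sum.elim (Pi.single i 1) (b i))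
    (Sum.elim (fun i => x i - ∑ j, b i j • y j) y) (fun i => ?_) ?_
  · simp [Pi.single_apply, ite_smul]
  · convert h using 1
    ext (i | j) <;> simp [Pi.single_apply]

end TrivialRelation

section HomogeneousRelation

open DirectSum

universe u

theorem exists_finset_forall_eq_sum_decompose {Γ G ι : Type*} [DecidableEq Γ]
    [AddCommGroup G] (ℳ : Γ → AddSubgroup G) [Decomposition ℳ] [Finite ι] (y : ι → G) :
    ∃ s : Finset Γ, ∀ i, y i = ∑ d ∈ s, (decompose ℳ (y i) d : G) := by
  classical
  have := Fintype.ofFinite ι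
  refine ⟨Finset.univ.biUnion fun i => (decompose ℳ (y i)).support, fun i => ?_⟩
  conv_lhs => rw [← sum_support_decompose ℳ (y i)]
  refine Finset.sum_subset
    (Finset.subset_biUnion_of_mem (fun i => (decompose ℳ (y i)).support) (Finset.mem_univ i))
    fun d _ hd => ?_
  rw [DFinsupp.notMem_support_iff.mp hd, ZeroMemClass.coe_zero]

variable {Γ : Type u} [AddCommGroup Γ] [DecidableEq Γ] {R G : Type*} [CommRing R] [AddCommGroup G]
  [Module R G] (𝒜 : Γ → AddSubgroup R) (ℳ : Γ → AddSubgroup G) [Decomposition ℳ]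

theorem coe_decompose_smul_of_right_mem [Decomposition 𝒜] [SetLike.GradedSMul 𝒜 ℳ] (b : R)
    {d : Γ} {y : G} (hy : y ∈ ℳ d) (q : Γ) :
    (decompose ℳ (b • y) q : G) = (decompose 𝒜 b (q - d) : R) • y := by
  induction b using Decomposition.inductionOn 𝒜 with
  | zero => simp
  | @homogeneous e b =>
    have hby : (b : R) • y ∈ ℳ (e + d) := SetLike.GradedSMul.smul_mem b.2 hy
    by_cases h : e = q - d
    · subst h
      rw [decompose_of_mem_same 𝒜 b.2, decompose_of_mem_same ℳ (by simpa using hby)]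
    · rw [decompose_of_mem_ne 𝒜 b.2 h, zero_smul,
        decompose_of_mem_ne ℳ hby fun h' => h (eq_sub_of_add_eq h')]
  | add b c hb hc => simp [add_smul, hb, hc]

theorem exists_homogeneous_trivialization [GradedRing 𝒜] [SetLike.GradedSMul 𝒜 ℳ]
    [Module.Flat R G] {ι : Type*} [Fintype ι] {n : Γ} {p q : ι → Γ} (hpq : ∀ i, p i + q i = n)
    {a : ι → R} {x : ι → G} (ha : ∀ i, a i ∈ 𝒜 (p i)) (hx : ∀ i, x i ∈ ℳ (q i))
    (hax : ∑ i, a i • x i = 0) :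
    ∃ (κ : Type u) (_ : Fintype κ) (d : κ → Γ) (b : ι → κ → R) (y : κ → G),
      (∀ i j, b i j ∈ 𝒜 (q i - d j)) ∧ (∀ j, y j ∈ ℳ (d j)) ∧
      (∀ i, x i = ∑ j, b i j • y j) ∧ ∀ j, ∑ i, a i * b i j = 0 := by
  obtain ⟨l, b, y, hxy, hab⟩ := Module.Flat.isTrivialRelation_of_sum_smul_eq_zero hax
  obtain ⟨s, hs⟩ := exists_finset_forall_eq_sum_decompose ℳ y
  refine ⟨Fin l × s, inferInstance, fun j => j.2,
    fun i j => decompose 𝒜 (b i j.1) (q i - j.2), fun j => decompose ℳ (y j.1) j.2,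
    fun i j => SetLike.coe_mem _, fun j => SetLike.coe_mem _, fun i => ?_, fun ⟨j, d⟩ => ?_⟩
  · have hcomp : ∀ j, (decompose ℳ (b i j • y j) (q i) : G) =
        ∑ d : s, (decompose 𝒜 (b i j) (q i - d) : R) • (decompose ℳ (y j) d : G) := fun j => by
      conv_lhs => rw [hs j, Finset.smul_sum, decompose_sum, ← Finset.sum_coe_sort s]
      rw [DFinsupp.finsetSum_apply, AddSubgroup.val_finsetSum]
      exact Finset.sum_congr rfl fun d _ =>
        coe_decompose_smul_of_right_mem 𝒜 ℳ (b i j) (SetLike.coe_mem _) (q i)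
    rw [← decompose_of_mem_same ℳ (hx i), hxy i, decompose_sum, DFinsupp.finsetSum_apply,
      AddSubgroup.val_finsetSum, Fintype.sum_prod_type]
    exact Finset.sum_congr rfl fun j _ => hcomp j
  · have hcomp : ∀ i, a i * (decompose 𝒜 (b i j) (q i - d) : R) =
        (decompose 𝒜 (a i * b i j) (n - d) : R) := fun i => by
      rw [← hpq i, add_sub_assoc, coe_decompose_mul_add_of_left_mem 𝒜 (ha i)]
    rw [Finset.sum_congr rfl fun i _ => hcomp i, ← AddSubgroup.val_finsetSum,
      ← DFinsupp.finsetSum_apply, ← decompose_sum, hab j, decompose_zero, DirectSum.zero_apply,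
      ZeroMemClass.coe_zero]

end HomogeneousRelation

section IntExtension

/-- The extension of an `ℕ`-indexed filtration or grading to `ℤ` by zero in negative degrees. It
encodes the convention `F₋₁ = 0` and makes differences of degrees meaningful. -/
def intExtend {X : Type*} [AddGroup X] (F : ℕ → AddSubgroup X) : ℤ → AddSubgroup X
  | .ofNat n => F n
  | .negSucc _ => ⊥

theorem intExtend_of_neg {X : Type*} [AddGroup X] (F : ℕ → AddSubgroup X) :
    ∀ {n : ℤ}, n < 0 → intExtend F n = ⊥
  | .negSucc _, _ => rfl

open DirectSum in
theorem isInternal_intExtend {X : Type*} [AddCommGroup X] {F : ℕ → AddSubgroup X}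
    (hF : IsInternal F) : IsInternal (intExtend F) := by
  let _ := hF.chooseDecomposition
  let φ (n : ℕ) : F n →+ ⨁ n, intExtend F n := of (fun n => intExtend F n) n
  let e : X →+ ⨁ n, intExtend F n := (toAddMonoid φ).comp (decomposeAddEquiv F : X →+ ⨁ n, F n)
  have he : ∀ (n : ℕ) (x : F n), e x = φ n x := fun n x =>
    (congrArg (toAddMonoid φ) (decompose_coe F x)).trans (toAddMonoid_of φ n x)
  refine (Decomposition.ofAddHom (intExtend F) e ?_ ?_).isInternal
  · ext x
    induction x using Decomposition.inductionOn F with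
    | zero => simp
    | @homogeneous n x =>
      exact (congrArg _ (he n x)).trans (coeAddMonoidHom_of (intExtend F) n x)
    | add x y hx hy => rw [map_add, hx, hy, map_add]
  · ext (n | n) x : 2
    · exact (congrArg e (coeAddMonoidHom_of (intExtend F) n x)).trans (he n x)
    · rw [show x = 0 from Subsingleton.elim (α := (⊥ : AddSubgroup X)) _ _, map_zero, map_zero]

end IntExtension

section AssociatedGraded

variable {A M R G : Type*} [CommRing A] [AddCommGroup M] [Module A M] [CommRing R]
  [AddCommGroup G] [Module R G]

/-- The pairs `(x, ξ)` such that `x` has filtration degree at most `n` and `ξ` is its symbol in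
degree `n`. -/
def symbolGraph {F : ℕ → AddSubgroup M} (μ : ∀ n, F n →+ G) : ℤ → AddSubgroup (M × G) :=
  intExtend fun n => ((F n).subtype.prod (μ n)).range

/-- `G` with the grading `ℳ` is the associated graded group of the filtration `F`, the classes of
elements of `F n` modulo `F (n - 1)` being given by the symbol map `μ n`. -/
structure IsAssociatedGraded (F : ℕ → AddSubgroup M) (ℳ : ℕ → AddSubgroup G)
    (μ : ∀ n, F n →+ G) : Prop where
  isInternal : DirectSum.IsInternal ℳ
  range_eq : ∀ n, Set.range (μ n) = ℳ n
  ker_zero : ∀ x : F 0, μ 0 x = 0 → x = 0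
  ker_succ : ∀ (n : ℕ) (x : F (n + 1)), μ (n + 1) x = 0 ↔ (x : M) ∈ F n

/-- The symbol of `a • x` in degree `n + m` is the product of the symbols of `a` and `x` in degrees
`n` and `m`. -/
def SymbolsMultiplicative {FA : ℕ → AddSubgroup A} {FM : ℕ → AddSubgroup M}
    (σ : ∀ n, FA n →+ R) (μ : ∀ n, FM n →+ G) : Prop :=
  ∀ (n m : ℕ) (a : FA n) (x : FM m),
    ∃ z : FM (n + m), (z : M) = (a : A) • (x : M) ∧ μ (n + m) z = σ n a • μ m x

variable {FA : ℕ → AddSubgroup A} {FM : ℕ → AddSubgroup M} {𝒜 : ℕ → AddSubgroup R}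
  {ℳ : ℕ → AddSubgroup G} {σ : ∀ n, FA n →+ R} {μ : ∀ n, FM n →+ G}

theorem mem_symbolGraph_ofNat {n : ℕ} {x : M} {ξ : G} :
    (x, ξ) ∈ symbolGraph μ (.ofNat n) ↔ ∃ z : FM n, (z : M) = x ∧ μ n z = ξ :=
  exists_congr fun _ => Prod.ext_iff

theorem mem_symbolGraph_negSucc {n : ℕ} {x : M} {ξ : G} :
    (x, ξ) ∈ symbolGraph μ (.negSucc n) ↔ x = 0 ∧ ξ = 0 :=
  Prod.ext_iff

theorem sum_mem_symbolGraph {ι : Type*} [Fintype ι] {n : ℤ} {x : ι → M} {ξ : ι → G}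
    (h : ∀ i, (x i, ξ i) ∈ symbolGraph μ n) : (∑ i, x i, ∑ i, ξ i) ∈ symbolGraph μ n := by
  rw [prod_mk_sum]
  exact sum_mem fun i _ => h i

theorem mem_intExtend_iff_exists_mem_symbolGraph (μ : ∀ n, FM n →+ G) {n : ℤ} {x : M} :
    x ∈ intExtend FM n ↔ ∃ ξ, (x, ξ) ∈ symbolGraph μ n := by
  cases n with
  | ofNat n =>
    simp only [mem_symbolGraph_ofNat]
    exact ⟨fun hx => ⟨_, ⟨x, hx⟩, rfl, rfl⟩, fun ⟨_, z, hz, _⟩ => hz ▸ z.2⟩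
  | negSucc n => simp [mem_symbolGraph_negSucc, intExtend]

theorem eq_zero_of_zero_mem_symbolGraph {n : ℤ} {ξ : G} (h : ((0 : M), ξ) ∈ symbolGraph μ n) :
    ξ = 0 := by
  cases n with
  | ofNat n =>
    obtain ⟨z, hz, rfl⟩ := mem_symbolGraph_ofNat.mp h
    rw [show z = 0 from Subtype.ext hz, map_zero]
  | negSucc n => exact (mem_symbolGraph_negSucc.mp h).2

theorem SymbolsMultiplicative.smul_mem (h : SymbolsMultiplicative σ μ) {i j : ℤ} {a : A} {α : R}
    {x : M} {ξ : G} (ha : (a, α) ∈ symbolGraph σ i) (hx : (x, ξ) ∈ symbolGraph μ j) :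
    (a • x, α • ξ) ∈ symbolGraph μ (i + j) := by
  match i, j with
  | .ofNat i, .ofNat j =>
    obtain ⟨a, rfl, rfl⟩ := mem_symbolGraph_ofNat.mp ha
    obtain ⟨x, rfl, rfl⟩ := mem_symbolGraph_ofNat.mp hx
    exact mem_symbolGraph_ofNat.mpr (h i j a x)
  | .negSucc i, _ =>
    obtain ⟨rfl, rfl⟩ := mem_symbolGraph_negSucc.mp ha
    rw [zero_smul, zero_smul]
    exact zero_mem _
  | .ofNat i, .negSucc j =>
    obtain ⟨rfl, rfl⟩ := mem_symbolGraph_negSucc.mp hx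
    rw [smul_zero, smul_zero]
    exact zero_mem _

namespace IsAssociatedGraded

theorem mem_intExtend_iff (h : IsAssociatedGraded FM ℳ μ) {n : ℤ} {ξ : G} :
    ξ ∈ intExtend ℳ n ↔ ∃ x, (x, ξ) ∈ symbolGraph μ n := by
  cases n with
  | ofNat n =>
    change ξ ∈ (ℳ n : Set G) ↔ _
    simp only [mem_symbolGraph_ofNat, ← h.range_eq, Set.mem_range]
    exact ⟨fun ⟨x, hx⟩ => ⟨x, x, rfl, hx⟩, fun ⟨_, x, _, hx⟩ => ⟨x, hx⟩⟩
  | negSucc n => simp [mem_symbolGraph_negSucc, intExtend]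

theorem mem_intExtend_sub_one (h : IsAssociatedGraded FM ℳ μ) {n : ℤ} {x : M}
    (hx : (x, (0 : G)) ∈ symbolGraph μ n) : x ∈ intExtend FM (n - 1) := by
  match n with
  | .ofNat 0 =>
    obtain ⟨z, rfl, hz⟩ := mem_symbolGraph_ofNat.mp hx
    rw [h.ker_zero z hz]
    exact zero_mem _
  | .ofNat (n + 1) =>
    obtain ⟨z, rfl, hz⟩ := mem_symbolGraph_ofNat.mp hx
    rw [Int.ofNat_eq_natCast, Nat.cast_succ, add_sub_cancel_right]
    exact (h.ker_succ n z).mp hz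
  | .negSucc n =>
    rw [(mem_symbolGraph_negSucc.mp hx).1]
    exact zero_mem _

theorem gradedSMul (hσ : IsAssociatedGraded FA 𝒜 σ) (hμ : IsAssociatedGraded FM ℳ μ)
    (hsmul : SymbolsMultiplicative σ μ) :
    SetLike.GradedSMul (intExtend 𝒜) (intExtend ℳ) where
  smul_mem i j α ξ hα hξ := by
    obtain ⟨a, ha⟩ := hσ.mem_intExtend_iff.mp hα
    obtain ⟨x, hx⟩ := hμ.mem_intExtend_iff.mp hξ
    exact hμ.mem_intExtend_iff.mpr ⟨a • x, hsmul.smul_mem ha hx⟩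

theorem gradedMonoid (hσ : IsAssociatedGraded FA 𝒜 σ) (hone : (1, 1) ∈ symbolGraph σ 0)
    (hmul : SymbolsMultiplicative σ σ) : SetLike.GradedMonoid (intExtend 𝒜) where
  one_mem := hσ.mem_intExtend_iff.mpr ⟨1, hone⟩
  mul_mem _ _ _ _ hα hβ := (hσ.gradedSMul hσ hmul).smul_mem hα hβ

theorem exists_lift_trivialization [Module.Flat R G] (hσ : IsAssociatedGraded FA 𝒜 σ)
    (hμ : IsAssociatedGraded FM ℳ μ) (hone : (1, 1) ∈ symbolGraph σ 0)
    (hmul : SymbolsMultiplicative σ σ) (hsmul : SymbolsMultiplicative σ μ)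
    {ι : Type*} [Fintype ι] {n : ℤ} {p q : ι → ℤ} (hpq : ∀ i, p i + q i = n) {a : ι → A}
    {x : ι → M} (ha : ∀ i, a i ∈ intExtend FA (p i)) (hx : ∀ i, x i ∈ intExtend FM (q i))
    (hax : ∑ i, a i • x i = 0) :
    ∃ (κ : Type) (_ : Fintype κ) (d : κ → ℤ) (b : ι → κ → A) (y : κ → M),
      (∀ j, y j ∈ intExtend FM (d j)) ∧
      (∀ i, x i - ∑ j, b i j • y j ∈ intExtend FM (q i - 1)) ∧
      ∀ j, ∑ i, a i * b i j ∈ intExtend FA (n - d j - 1) := by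
  choose α hα using fun i => (mem_intExtend_iff_exists_mem_symbolGraph σ).mp (ha i)
  choose ξ hξ using fun i => (mem_intExtend_iff_exists_mem_symbolGraph μ).mp (hx i)
  have hαξ : ∑ i, α i • ξ i = 0 := eq_zero_of_zero_mem_symbolGraph <|
    hax ▸ sum_mem_symbolGraph fun i => hpq i ▸ hsmul.smul_mem (hα i) (hξ i)
  let _ : GradedRing (intExtend 𝒜) :=
    { hσ.gradedMonoid hone hmul, (isInternal_intExtend hσ.isInternal).chooseDecomposition with }
  let _ := (isInternal_intExtend hμ.isInternal).chooseDecomposition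
  have := hσ.gradedSMul hμ hsmul
  obtain ⟨κ, _, d, β, η, hβ, hη, hξη, hαβ⟩ :=
    exists_homogeneous_trivialization (intExtend 𝒜) (intExtend ℳ) hpq
      (fun i => hσ.mem_intExtend_iff.mpr ⟨_, hα i⟩) (fun i => hμ.mem_intExtend_iff.mpr ⟨_, hξ i⟩)
      hαξ
  choose b hb using fun i j => hσ.mem_intExtend_iff.mp (hβ i j)
  choose y hy using fun j => hμ.mem_intExtend_iff.mp (hη j)
  refine ⟨κ, inferInstance, d, b, y,
    fun j => (mem_intExtend_iff_exists_mem_symbolGraph μ).mpr ⟨_, hy j⟩,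
    fun i => hμ.mem_intExtend_sub_one ?_, fun j => hσ.mem_intExtend_sub_one ?_⟩
  · have hsum : (∑ j, b i j • y j, ∑ j, β i j • η j) ∈ symbolGraph μ (q i) :=
      sum_mem_symbolGraph fun j => sub_add_cancel (q i) (d j) ▸ hsmul.smul_mem (hb i j) (hy j)
    simpa [← hξη i] using sub_mem (hξ i) hsum
  · rw [← hαβ j]
    refine sum_mem_symbolGraph fun i => ?_
    rw [← hpq i, add_sub_assoc]
    exact hmul.smul_mem (hα i) (hb i j)

theorem isTrivialRelation [Module.Flat R G] (hσ : IsAssociatedGraded FA 𝒜 σ)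
    (hμ : IsAssociatedGraded FM ℳ μ) (hone : (1, 1) ∈ symbolGraph σ 0)
    (hmul : SymbolsMultiplicative σ σ) (hsmul : SymbolsMultiplicative σ μ) (N : ℕ) :
    ∀ {ι : Type} [Fintype ι] {p q : ι → ℤ}, (∀ i, p i + q i = N - 1) → ∀ {a : ι → A} {x : ι → M},
      (∀ i, a i ∈ intExtend FA (p i)) → (∀ i, x i ∈ intExtend FM (q i)) →
      ∑ i, a i • x i = 0 → Module.IsTrivialRelation a x := by
  induction N with
  | zero =>
    intro ι _ p q hpq a x ha hx _
    refine isTrivialRelation_of_forall_eq_zero_or_eq_zero fun i => ?_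
    have hneg : p i < 0 ∨ q i < 0 := by have := hpq i; lia
    refine hneg.imp (fun hp => ?_) fun hq => ?_
    · simpa [intExtend_of_neg FA hp] using ha i
    · simpa [intExtend_of_neg FM hq] using hx i
  | succ N ih =>
    intro ι _ p q hpq a x ha hx hax
    obtain ⟨κ, _, d, b, y, hy, hxy, hab⟩ :=
      hσ.exists_lift_trivialization hμ hone hmul hsmul hpq ha hx hax
    refine isTrivialRelation_of_sumElim b y <|
      ih (p := Sum.elim p fun j => ((N + 1 : ℕ) - 1 : ℤ) - d j - 1) (q := Sum.elim (q · - 1) d)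
        ?_ ?_ ?_ ?_
    · rintro (i | j)
      · have := hpq i
        simp only [Sum.elim_inl]
        lia
      · simp only [Sum.elim_inr]
        lia
    · exact Sum.forall.mpr ⟨ha, hab⟩
    · exact Sum.forall.mpr ⟨hxy, hy⟩
    · rw [Fintype.sum_sum_type]
      simp only [Sum.elim_inl, Sum.elim_inr, smul_sub, Finset.sum_sub_distrib, hax, zero_sub,
        Finset.smul_sum, Finset.sum_smul, mul_smul]
      rw [Finset.sum_comm, neg_add_cancel]

end IsAssociatedGraded

end AssociatedGraded

/-- Let `A` be a filtered ring and `M` a filtered `A`-module.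
If the associated graded module `gr M` is flat over the associated graded ring `gr A`,
then `M` is a flat `A`-module.

The associated graded ring/module are encoded as data: a ring `grA` with an internal
grading `𝒜` together with surjections `σ n : FA n →+ grA` onto the graded pieces whose
kernel is `FA (n-1)` (with `FA (-1) = 0`), compatible with multiplication; similarly a
`grA`-module `grM` with grading `ℳ` and maps `μ n : FM n →+ grM` compatible with the
scalar action. -/
theorem deformations_stmt0
    {A M grA grM : Type*} [CommRing A] [AddCommGroup M] [Module A M]
    [CommRing grA] [AddCommGroup grM] [Module grA grM]
    -- the filtration on the ring A
    (FA : ℕ → AddSubgroup A)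
    (hFAmono : Monotone FA) (hFAone : (1 : A) ∈ FA 0)
    (hFAmul : ∀ (n m : ℕ), ∀ a ∈ FA n, ∀ b ∈ FA m, a * b ∈ FA (n + m))
    (hFAexh : ∀ a : A, ∃ n, a ∈ FA n)
    -- the filtration on the module M
    (FM : ℕ → AddSubgroup M)
    (hFMmono : Monotone FM)
    (hFMsmul : ∀ (n m : ℕ), ∀ a ∈ FA n, ∀ x ∈ FM m, a • x ∈ FM (n + m))
    (hFMexh : ∀ x : M, ∃ n, x ∈ FM n)
    -- grA is the associated graded ring, with graded pieces 𝒜 n ≅ FA n / FA (n-1)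
    (𝒜 : ℕ → AddSubgroup grA) (ℳ : ℕ → AddSubgroup grM)
    (hAint : DirectSum.IsInternal 𝒜) (hMint : DirectSum.IsInternal ℳ)
    (σ : ∀ n, FA n →+ grA) (μ : ∀ n, FM n →+ grM)
    (hσrange : ∀ n, Set.range (σ n) = (𝒜 n : Set grA))
    (hμrange : ∀ n, Set.range (μ n) = (ℳ n : Set grM))
    (hσker0 : ∀ a : FA 0, σ 0 a = 0 → a = 0)
    (hσker : ∀ (n : ℕ) (a : FA (n + 1)), σ (n + 1) a = 0 ↔ (a : A) ∈ FA n)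
    (hμker0 : ∀ x : FM 0, μ 0 x = 0 → x = 0)
    (hμker : ∀ (n : ℕ) (x : FM (n + 1)), μ (n + 1) x = 0 ↔ (x : M) ∈ FM n)
    (hσmul : ∀ (n m : ℕ) (a : FA n) (b : FA m),
      σ (n + m) ⟨(a : A) * (b : A), hFAmul n m a a.2 b b.2⟩ = σ n a * σ m b)
    (hσone : σ 0 ⟨1, hFAone⟩ = 1)
    (hcompat : ∀ (n m : ℕ) (a : FA n) (x : FM m),
      μ (n + m) ⟨(a : A) • (x : M), hFMsmul n m a a.2 x x.2⟩ = σ n a • μ m x)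
    -- flatness of the associated graded module
    (hflat : Module.Flat grA grM) :
    Module.Flat A M := by
  have hσ : IsAssociatedGraded FA 𝒜 σ := ⟨hAint, hσrange, hσker0, hσker⟩
  have hμ : IsAssociatedGraded FM ℳ μ := ⟨hMint, hμrange, hμker0, hμker⟩
  have hone : (1, 1) ∈ symbolGraph σ 0 := mem_symbolGraph_ofNat.mpr ⟨⟨1, hFAone⟩, rfl, hσone⟩
  have hmul : SymbolsMultiplicative σ σ := fun n m a b => ⟨_, rfl, hσmul n m a b⟩
  have hsmul : SymbolsMultiplicative σ μ := fun n m a x => ⟨_, rfl, hcompat n m a x⟩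
  refine Module.Flat.of_forall_isTrivialRelation fun {l a x} hax => ?_
  choose p hp using fun i => hFAexh (a i)
  choose q hq using fun i => hFMexh (x i)
  let n := ∑ i, (p i + q i)
  have hn : ∀ i, p i + q i ≤ n := fun i =>
    Finset.single_le_sum_of_canonicallyOrdered (f := fun i => p i + q i) (Finset.mem_univ i)
  refine hσ.isTrivialRelation hμ hone hmul hsmul (n + 1) (p := fun i => p i)
    (q := fun i => (n - p i : ℕ)) (fun i => ?_) hp (fun i => hFMmono ?_ (hq i)) hax
  · have := hn i
    lia
  · exact Nat.le_sub_of_add_le' (hn i)
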